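/- arXiv:2601.00377 — 2 statements merged into one kernel-verified Lean document; each statement's English description precedes it below -/
import Mathlib

section
/- Let A, Ã ∈ ℝ^{m×r₁}, B, B̃ ∈ ℝ^{m×r₂}, and C, C̃ ∈ ℝ^{p×r₃} all have orthonormal columns, and let y ∈ ℝ^m and x ∈ ℝ^{p·m} (indexed by Fin p × Fin m) be vectors. Then ‖Ãᵀ y xᵀ (C̃ ⊗ B̃) − Aᵀ y xᵀ (C ⊗ B)‖_F ≤ ‖y xᵀ‖_F (‖Ã − A‖_F + ‖B̃ − B‖_F + ‖C̃ − C‖_F), where y xᵀ denotes the rank-one matrix (outer product) with ‖y xᵀ‖_F = ‖y‖₂ ‖x‖₂. -/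
open Matrix
open scoped Kronecker

/-- The Euclidean (ℓ²) norm of a real vector. -/
noncomputable def euclNorm {n : Type*} [Fintype n] (v : n → ℝ) : ℝ :=
  Real.sqrt (∑ i, (v i) ^ 2)

/-- The Frobenius norm of a real matrix. -/
noncomputable def frobNorm {m n : Type*} [Fintype m] [Fintype n] (A : Matrix m n ℝ) : ℝ :=
  Real.sqrt (∑ i, ∑ j, (A i j) ^ 2)

theorem frobNorm_eq_norm {m n : Type*} [Fintype m] [Fintype n] (A : Matrix m n ℝ) :
    frobNorm A = @norm _ (Matrix.frobeniusSeminormedAddCommGroup).toNorm A := by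
  rw [Matrix.frobenius_norm_def, frobNorm, Real.sqrt_eq_rpow]
  simp

theorem frobNorm_nonneg {m n : Type*} [Fintype m] [Fintype n] (A : Matrix m n ℝ) :
    0 ≤ frobNorm A := Real.sqrt_nonneg _

theorem frobNorm_mul {l m n : Type*} [Fintype l] [Fintype m] [Fintype n]
    (A : Matrix l m ℝ) (B : Matrix m n ℝ) : frobNorm (A * B) ≤ frobNorm A * frobNorm B := by
  simp only [frobNorm_eq_norm]
  exact Matrix.frobenius_norm_mul A B

theorem frobNorm_add {m n : Type*} [Fintype m] [Fintype n]
    (A B : Matrix m n ℝ) : frobNorm (A + B) ≤ frobNorm A + frobNorm B := by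
  simp only [frobNorm_eq_norm]
  letI : SeminormedAddCommGroup (Matrix m n ℝ) := Matrix.frobeniusSeminormedAddCommGroup
  exact norm_add_le A B

theorem frobNorm_transpose {m n : Type*} [Fintype m] [Fintype n]
    (A : Matrix m n ℝ) : frobNorm Aᵀ = frobNorm A := by
  simp only [frobNorm_eq_norm]
  exact Matrix.frobenius_norm_transpose A

theorem sum_sq_eq_trace {m n : Type*} [Fintype m] [Fintype n] (A : Matrix m n ℝ) :
    ∑ i, ∑ j, (A i j) ^ 2 = (Aᵀ * A).trace := by
  rw [Finset.sum_comm]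
  simp [Matrix.trace, Matrix.mul_apply, sq]

theorem frobNorm_contract {m n k : Type*} [Fintype m] [Fintype n] [Fintype k] [DecidableEq k]
    (Q : Matrix m k ℝ) (hQ : Qᵀ * Q = 1) (M : Matrix m n ℝ) :
    frobNorm (Qᵀ * M) ≤ frobNorm M := by
  unfold frobNorm
  apply Real.sqrt_le_sqrt
  have h0 : 0 ≤ ∑ i, ∑ j, ((M - Q * (Qᵀ * M)) i j) ^ 2 := by positivity
  rw [sum_sq_eq_trace] at h0 ⊢
  rw [sum_sq_eq_trace]
  have e : (M - Q * (Qᵀ * M))ᵀ * (M - Q * (Qᵀ * M)) = Mᵀ * M - (Qᵀ * M)ᵀ * (Qᵀ * M) := by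
    have h1 : Qᵀ * (M - Q * (Qᵀ * M)) = 0 := by
      rw [Matrix.mul_sub, ← Matrix.mul_assoc Qᵀ Q, hQ, Matrix.one_mul, sub_self]
    rw [Matrix.transpose_sub, Matrix.sub_mul, Matrix.transpose_mul Q, Matrix.mul_assoc _ Qᵀ, h1,
      Matrix.mul_zero, sub_zero, Matrix.mul_sub, Matrix.transpose_mul, Matrix.transpose_transpose,
      Matrix.mul_assoc Mᵀ]
  rw [e, Matrix.trace_sub] at h0
  linarith

theorem frobNorm_contract_right {m n k : Type*} [Fintype m] [Fintype n] [Fintype k] [DecidableEq k]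
    (Q : Matrix m k ℝ) (hQ : Qᵀ * Q = 1) (M : Matrix n m ℝ) :
    frobNorm (M * Q) ≤ frobNorm M := by
  have := frobNorm_contract Q hQ Mᵀ
  rwa [← Matrix.transpose_mul, frobNorm_transpose, frobNorm_transpose] at this

theorem frobNorm_vecMulVec {m n : Type*} [Fintype m] [Fintype n] (y : m → ℝ) (x : n → ℝ) :
    frobNorm (Matrix.vecMulVec y x) = euclNorm y * euclNorm x := by
  unfold frobNorm euclNorm
  rw [← Real.sqrt_mul (by positivity), Finset.sum_mul_sum]
  simp [Matrix.vecMulVec_apply, mul_pow]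

theorem euclNorm_prod {m n : Type*} [Fintype m] [Fintype n] (x : m × n → ℝ) :
    euclNorm x = frobNorm (Matrix.of fun i j => x (i, j)) := by
  unfold frobNorm euclNorm
  rw [Fintype.sum_prod_type]
  simp

theorem euclNorm_vecMul_kron {m n k l : Type*} [Fintype m] [Fintype n] [Fintype k] [Fintype l]
    (x : m × n → ℝ) (C : Matrix m k ℝ) (B : Matrix n l ℝ) :
    euclNorm (x ᵥ* (C ⊗ₖ B)) = frobNorm (Cᵀ * (Matrix.of fun i j => x (i, j)) * B) := by
  rw [euclNorm_prod]
  congr 1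
  ext a b
  simp only [Matrix.of_apply, Matrix.vecMul, dotProduct, Matrix.mul_apply, Matrix.kroneckerMap_apply,
    Fintype.sum_prod_type, Matrix.transpose_apply, Finset.sum_mul]
  rw [Finset.sum_comm]
  refine Finset.sum_congr rfl fun i _ => Finset.sum_congr rfl fun j _ => by ring

theorem frobNorm_vecMulVec_mul_kron {q m n k l : Type*} [Fintype q] [Fintype m] [Fintype n]
    [Fintype k] [Fintype l] (y : q → ℝ)
    (x : m × n → ℝ) (C : Matrix m k ℝ) (B : Matrix n l ℝ) :
    frobNorm (Matrix.vecMulVec y x * (C ⊗ₖ B)) =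
      euclNorm y * frobNorm (Cᵀ * (Matrix.of fun i j => x (i, j)) * B) := by
  rw [Matrix.vecMulVec_mul, frobNorm_vecMulVec, euclNorm_vecMul_kron]

/-- Three-factor perturbation bound for rank-one data matrices: if all factor
matrices have orthonormal columns, then
`‖Ãᵀ y xᵀ (C̃ ⊗ B̃) − Aᵀ y xᵀ (C ⊗ B)‖_F
  ≤ ‖y xᵀ‖_F (‖Ã − A‖_F + ‖B̃ − B‖_F + ‖C̃ − C‖_F)`,
where `y xᵀ` is the rank-one outer product with `‖y xᵀ‖_F = ‖y‖₂‖x‖₂`. -/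
theorem rank_one_three_factor_perturbation
    (m p r₁ r₂ r₃ : ℕ)
    (A At : Matrix (Fin m) (Fin r₁) ℝ)
    (B Bt : Matrix (Fin m) (Fin r₂) ℝ)
    (C Ct : Matrix (Fin p) (Fin r₃) ℝ)
    (hA : Aᵀ * A = 1) (hAt : Atᵀ * At = 1)
    (hB : Bᵀ * B = 1) (hBt : Btᵀ * Bt = 1)
    (hC : Cᵀ * C = 1) (hCt : Ctᵀ * Ct = 1)
    (y : Fin m → ℝ) (x : Fin p × Fin m → ℝ) :
    frobNorm (Matrix.vecMulVec y x) = euclNorm y * euclNorm x ∧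
    frobNorm (Atᵀ * Matrix.vecMulVec y x * (Ct ⊗ₖ Bt)
              - Aᵀ * Matrix.vecMulVec y x * (C ⊗ₖ B))
      ≤ frobNorm (Matrix.vecMulVec y x)
          * (frobNorm (At - A) + frobNorm (Bt - B) + frobNorm (Ct - C)) := by
  refine ⟨frobNorm_vecMulVec y x, ?_⟩
  have hy : 0 ≤ euclNorm y := Real.sqrt_nonneg _
  have hx : 0 ≤ euclNorm x := Real.sqrt_nonneg _
  have split : Atᵀ * Matrix.vecMulVec y x * (Ct ⊗ₖ Bt) - Aᵀ * Matrix.vecMulVec y x * (C ⊗ₖ B)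
      = (At - A)ᵀ * (Matrix.vecMulVec y x * (Ct ⊗ₖ Bt))
        + (Aᵀ * (Matrix.vecMulVec y x * (Ct ⊗ₖ (Bt - B)))
        + Aᵀ * (Matrix.vecMulVec y x * ((Ct - C) ⊗ₖ B))) := by
    have e1 : Ct ⊗ₖ (Bt - B) = Ct ⊗ₖ Bt - Ct ⊗ₖ B := by
      ext ⟨i, j⟩ ⟨k, l⟩; simp [mul_sub]
    have e2 : (Ct - C) ⊗ₖ B = Ct ⊗ₖ B - C ⊗ₖ B := by
      ext ⟨i, j⟩ ⟨k, l⟩; simp [sub_mul]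
    rw [e1, e2, Matrix.transpose_sub]
    simp only [Matrix.mul_sub, Matrix.sub_mul, Matrix.mul_assoc]
    abel
  have hX := euclNorm_prod x
  set X : Matrix (Fin p) (Fin m) ℝ := Matrix.of fun i j => x (i, j) with hXdef
  have b1 : frobNorm ((At - A)ᵀ * (Matrix.vecMulVec y x * (Ct ⊗ₖ Bt)))
      ≤ frobNorm (At - A) * (euclNorm y * euclNorm x) := by
    refine (frobNorm_mul _ _).trans ?_
    rw [frobNorm_transpose, frobNorm_vecMulVec_mul_kron, hX]
    refine mul_le_mul_of_nonneg_left (mul_le_mul_of_nonneg_left ?_ hy) (frobNorm_nonneg _)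
    exact (frobNorm_contract_right Bt hBt _).trans (frobNorm_contract Ct hCt _)
  have b2 : frobNorm (Aᵀ * (Matrix.vecMulVec y x * (Ct ⊗ₖ (Bt - B))))
      ≤ euclNorm y * (euclNorm x * frobNorm (Bt - B)) := by
    refine (frobNorm_contract A hA _).trans ?_
    rw [frobNorm_vecMulVec_mul_kron, hX]
    refine mul_le_mul_of_nonneg_left ?_ hy
    exact (frobNorm_mul _ _).trans
      (mul_le_mul_of_nonneg_right (frobNorm_contract Ct hCt _) (frobNorm_nonneg _))
  have b3 : frobNorm (Aᵀ * (Matrix.vecMulVec y x * ((Ct - C) ⊗ₖ B)))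
      ≤ euclNorm y * (frobNorm (Ct - C) * euclNorm x) := by
    refine (frobNorm_contract A hA _).trans ?_
    rw [frobNorm_vecMulVec_mul_kron, hX]
    refine mul_le_mul_of_nonneg_left ?_ hy
    refine (frobNorm_contract_right B hB _).trans ((frobNorm_mul _ _).trans ?_)
    rw [frobNorm_transpose]
  rw [split, frobNorm_vecMulVec]
  have t1 := frobNorm_add ((At - A)ᵀ * (Matrix.vecMulVec y x * (Ct ⊗ₖ Bt)))
    (Aᵀ * (Matrix.vecMulVec y x * (Ct ⊗ₖ (Bt - B)))
        + Aᵀ * (Matrix.vecMulVec y x * ((Ct - C) ⊗ₖ B)))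
  have t2 := frobNorm_add (Aᵀ * (Matrix.vecMulVec y x * (Ct ⊗ₖ (Bt - B))))
    (Aᵀ * (Matrix.vecMulVec y x * ((Ct - C) ⊗ₖ B)))
  linarith
end

section
/- Let T ≥ 1 and β > 0, and for i = 1, 2, 3 let α_i > 0 and λ_i > 0. Let Z ∈ ℝ^{N×d}, A, Â ∈ ℝ^{d×q}, g, ĝ ∈ ℝ^q, e ∈ ℝ^N, and set y = Z(A g) + e and Δ̂ = Â ĝ − A g. For i = 1, 2, 3 let L_i ∈ ℝ^{m_i×m_i} be symmetric and A_i, Â_i ∈ ℝ^{m_i×r_i}, with ΔA_i = Â_i − A_i. Let S = { j : g_j ≠ 0 } be the support of g. Assume: (1) optimality: (1/(2T))‖y − Z(Â ĝ)‖₂² + β‖ĝ‖₁ + Σ_i α_i tr(Â_iᵀ L_i Â_i) ≤ (1/(2T))‖y − Z(A g)‖₂² + β‖g‖₁ + Σ_i α_i tr(A_iᵀ L_i A_i); (2) for each i, tr(ΔA_iᵀ L_i ΔA_i) ≥ (λ_i/2)‖ΔA_i‖_F²; (3) (1/T)⟨Z Δ̂, e⟩ ≤ β‖Δ̂‖₁;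 (4) (1/T)‖Z Δ̂‖₂² ≥ (ϖ/2)‖Δ̂‖₂² for some ϖ > 0. Then (ϖ/4)‖Δ̂‖₂² + Σ_{i=1}^3 (α_i λ_i/2)‖ΔA_i‖_F² ≤ β‖Δ̂‖₁ + Σ_{i=1}^3 2 α_i ‖L_i A_i‖_F ‖ΔA_i‖_F + β Σ_{j∈S} |ĝ_j − g_j|. -/
open Matrix

theorem euclNorm_sq_aux {n : Type*} [Fintype n] (v : n → ℝ) :
    euclNorm v ^ 2 = ∑ i, (v i) ^ 2 :=
  Real.sq_sqrt (Finset.sum_nonneg fun _ _ => sq_nonneg _)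

theorem frob_cs_aux {m n : Type*} [Fintype m] [Fintype n] (D B : Matrix m n ℝ) :
    -Matrix.trace (Dᵀ * B) ≤ frobNorm B * frobNorm D := by
  have h1 : Matrix.trace (Dᵀ * B) = ∑ p : m × n, D p.1 p.2 * B p.1 p.2 := by
    rw [Fintype.sum_prod_type, Finset.sum_comm]
    simp [Matrix.trace, Matrix.mul_apply]
  have hD : frobNorm D = Real.sqrt (∑ p : m × n, (-D p.1 p.2) ^ 2) := by
    rw [Fintype.sum_prod_type]; simp [frobNorm]
  have hB : frobNorm B = Real.sqrt (∑ p : m × n, (B p.1 p.2) ^ 2) := by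
    rw [Fintype.sum_prod_type]; simp [frobNorm]
  rw [h1, hD, hB, mul_comm]
  have := Real.sum_mul_le_sqrt_mul_sqrt Finset.univ
    (fun p : m × n => -D p.1 p.2) (fun p => B p.1 p.2)
  simpa [Finset.sum_neg_distrib] using this

theorem trace_quad_aux {m n : Type*} [Fintype m] [Fintype n] (L : Matrix m m ℝ)
    (hL : Lᵀ = L) (F G : Matrix m n ℝ) :
    Matrix.trace (Gᵀ * L * G) = Matrix.trace (Fᵀ * L * F)
      + 2 * Matrix.trace ((G - F)ᵀ * (L * F))
      + Matrix.trace ((G - F)ᵀ * L * (G - F)) := by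
  have h : Matrix.trace (Fᵀ * L * G) = Matrix.trace (Gᵀ * L * F) := by
    rw [← Matrix.trace_transpose]
    simp [Matrix.transpose_mul, hL, Matrix.mul_assoc]
  simp only [Matrix.transpose_sub, Matrix.sub_mul, Matrix.mul_sub, Matrix.trace_sub,
    ← Matrix.mul_assoc, h]
  ring

/-- Deterministic basic inequality in the proof of the main error bound:
optimality of the penalized estimator, the graph-regularization lower bound,
the deviation bound and the restricted eigenvalue condition together imply
`(ϖ/4)‖Δ̂‖₂² + Σᵢ (αᵢλᵢ/2)‖ΔAᵢ‖_F²
  ≤ β‖Δ̂‖₁ + Σᵢ 2αᵢ‖Lᵢ Aᵢ‖_F ‖ΔAᵢ‖_F + β Σ_{j∈S} |ĝⱼ − gⱼ|`. -/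
theorem basic_inequality
    (T : ℕ) (hT : 1 ≤ T) (β : ℝ) (hβ : 0 < β)
    (α lam : Fin 3 → ℝ) (hα : ∀ i, 0 < α i) (hlam : ∀ i, 0 < lam i)
    (N d q : ℕ)
    (Z : Matrix (Fin N) (Fin d) ℝ)
    (A Ahat : Matrix (Fin d) (Fin q) ℝ)
    (g ghat : Fin q → ℝ) (e : Fin N → ℝ)
    (mdim rdim : Fin 3 → ℕ)
    (L : ∀ i : Fin 3, Matrix (Fin (mdim i)) (Fin (mdim i)) ℝ)
    (hLsymm : ∀ i, (L i)ᵀ = L i)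
    (F Fhat : ∀ i : Fin 3, Matrix (Fin (mdim i)) (Fin (rdim i)) ℝ)
    (ϖ : ℝ) (hϖ : 0 < ϖ)
    (y : Fin N → ℝ) (hy : y = Z.mulVec (A.mulVec g) + e)
    (Δ : Fin d → ℝ) (hΔ : Δ = Ahat.mulVec ghat - A.mulVec g)
    -- (1) optimality of the penalized estimator
    (hopt : (1 / (2 * (T : ℝ))) * euclNorm (y - Z.mulVec (Ahat.mulVec ghat)) ^ 2
              + β * (∑ j, |ghat j|)
              + ∑ i, α i * Matrix.trace ((Fhat i)ᵀ * L i * Fhat i)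
            ≤ (1 / (2 * (T : ℝ))) * euclNorm (y - Z.mulVec (A.mulVec g)) ^ 2
              + β * (∑ j, |g j|)
              + ∑ i, α i * Matrix.trace ((F i)ᵀ * L i * F i))
    -- (2) graph-regularization lower bound
    (hgraph : ∀ i, lam i / 2 * frobNorm (Fhat i - F i) ^ 2
                ≤ Matrix.trace ((Fhat i - F i)ᵀ * L i * (Fhat i - F i)))
    -- (3) deviation bound
    (hdev : (T : ℝ)⁻¹ * (Z.mulVec Δ ⬝ᵥ e) ≤ β * ∑ j, |Δ j|)
    -- (4) restricted eigenvalue condition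
    (hre : ϖ / 2 * euclNorm Δ ^ 2 ≤ (T : ℝ)⁻¹ * euclNorm (Z.mulVec Δ) ^ 2) :
    ϖ / 4 * euclNorm Δ ^ 2 + ∑ i, α i * lam i / 2 * frobNorm (Fhat i - F i) ^ 2
      ≤ β * (∑ j, |Δ j|)
        + (∑ i, 2 * α i * frobNorm (L i * F i) * frobNorm (Fhat i - F i))
        + β * ∑ j ∈ Finset.univ.filter (fun j => g j ≠ 0), |ghat j - g j| := by
  have hTpos : (0 : ℝ) < T := by exact_mod_cast hT
  have e1 : y - Z.mulVec (A.mulVec g) = e := by rw [hy]; simp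
  have e2 : y - Z.mulVec (Ahat.mulVec ghat) = e - Z.mulVec Δ := by
    rw [hy, hΔ, Matrix.mulVec_sub]; abel
  have e3 : euclNorm (e - Z.mulVec Δ) ^ 2
      = euclNorm e ^ 2 - 2 * (Z.mulVec Δ ⬝ᵥ e) + euclNorm (Z.mulVec Δ) ^ 2 := by
    simp only [euclNorm_sq_aux, dotProduct, Finset.mul_sum, ← Finset.sum_sub_distrib,
      ← Finset.sum_add_distrib, Pi.sub_apply]
    exact Finset.sum_congr rfl fun i _ => by ring
  rw [e1, e2, e3] at hopt
  have hT2 : 1 / (2 * (T : ℝ)) = (T : ℝ)⁻¹ / 2 := by field_simp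
  rw [hT2] at hopt
  have hl1 : (∑ j, |g j|) - (∑ j, |ghat j|)
      ≤ ∑ j ∈ Finset.univ.filter (fun j => g j ≠ 0), |ghat j - g j| := by
    rw [← Finset.sum_sub_distrib, Finset.sum_filter]
    refine Finset.sum_le_sum fun j _ => ?_
    split_ifs with h
    · rw [abs_sub_comm]; exact abs_sub_abs_le_abs_sub _ _
    · simp only [not_not] at h
      simp [h]
  have hl1' := mul_le_mul_of_nonneg_left hl1 hβ.le
  have htr : (∑ i, α i * lam i / 2 * frobNorm (Fhat i - F i) ^ 2)
        + (∑ i, α i * Matrix.trace ((F i)ᵀ * L i * F i))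
      ≤ (∑ i, 2 * α i * frobNorm (L i * F i) * frobNorm (Fhat i - F i))
        + ∑ i, α i * Matrix.trace ((Fhat i)ᵀ * L i * Fhat i) := by
    rw [← Finset.sum_add_distrib, ← Finset.sum_add_distrib]
    refine Finset.sum_le_sum fun i _ => ?_
    rw [trace_quad_aux (L i) (hLsymm i) (F i) (Fhat i)]
    have h1 := mul_le_mul_of_nonneg_left (hgraph i) (hα i).le
    have h2 := mul_le_mul_of_nonneg_left
      (frob_cs_aux (Fhat i - F i) (L i * F i)) (hα i).le
    linarith
  linarith
end
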